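/- arXiv:1812.09967 — 2 statements merged into one kernel-verified Lean document; each statement's English description precedes it below -/
import Mathlib

section
/- For all integers ℓ ≥ 1 and k ≥ 3^ℓ, there exists a positive semidefinite matrix Ψ ∈ ℝ^{S×S}, where S is the vertex set of the (k,ℓ)-spider, such that 3/2 ≤ ⟨Ψ, A^{(0)}⟩ ≤ 2, ⟨Ψ, A^{(1)}⟩ = k^{1/(2ℓ)}, ⟨Ψ, A^{(d)}⟩ = 0 for every integer d with 1 < d < 2ℓ, and ⟨Ψ, A^{(2ℓ)}⟩ = (k−1)/2. -/
/-!
The matrix is rotationally symmetric: it depends only on the levels of its two arguments.  Put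
`r = k ^ (1 / (2 l))`, so that `r ^ (2 l) = k` and `3 ≤ r ^ 2`, and let `e_t` (`levelVec`) be the
vector supported on level `t`, with value `1` at the root for `t = 0` and `r ^ t / k` for
`1 ≤ t ≤ l` (and `e_t = 0` for `t > l`).  With `B_d(u, v) = ⟨u vᵀ, A^(d)⟩` (`distForm`) one has
`B_d(e_0, e_t) = r ^ t [d = t]`, and for `1 ≤ t, s ≤ l`
`B_d(e_t, e_s) = r ^ (t + s) / k * ([|t - s| = d] + (k - 1) [t + s = d])`.
So, apart from pairs on a common arm, `B_d` extracts from a quadratic form in the `e_t` the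
coefficient of degree `d` of the polynomial obtained by substituting `e_t ↦ x ^ t`.  Writing `u²`
for `u uᵀ`, take the sum of squares

`Ψ = ¼ ∑_{t=1}^{l} (e_t - e_{t+2})² + (½ e_1 + e_0)² + (½ e_2 - 2 γ e_0)² + δ e_0²`,

with `γ, δ` real and `δ ≥ 0`.  The Toeplitz pattern (`½` on the diagonal, `-¼` two steps off it)
has vanishing antidiagonal sums in degrees `2 < d < 2 l`, leaves `(k - 1) / 2` in degree `2 l`, and
the cross term `e_0 e_1` gives `r` in degree `1`.  Pairs on a common arm contribute
only to `d = 0` and `d = 2`.  The parameter `γ` is fixed by the equation for `d = 2`; since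
`|γ| ≤ ¼` and `∑_{t=1}^{l} r ^ (2 t) / k ≤ 3 / 2` by the geometric series, the trace at `δ = 0` is
at most `1 + ¼ + ¾ = 2`, and `δ ≥ 0` is chosen to make it exactly `2`.
-/

/-- The vertex set of the `(k,ℓ)`-spider: the root (`none`) together with `k` paths
(arms) of length `ℓ`; `some (a, t)` is the vertex at distance `t+1` from the root
on arm `a`. -/
abbrev Spider (k l : ℕ) := Option (Fin k × Fin l)

/-- The graph distance in the `(k,ℓ)`-spider tree. -/
def spiderDist {k l : ℕ} : Spider k l → Spider k l → ℕ
  | none, none => 0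
  | none, some (_, t) => (t : ℕ) + 1
  | some (_, t), none => (t : ℕ) + 1
  | some (a, t), some (b, s) =>
      if a = b then Nat.dist (t : ℕ) (s : ℕ) else (t : ℕ) + (s : ℕ) + 2

/-- The distance-`d` adjacency matrix `A^{(d)}` of the `(k,ℓ)`-spider. -/
noncomputable def spiderA (k l d : ℕ) : Matrix (Spider k l) (Spider k l) ℝ :=
  Matrix.of fun i j => if spiderDist i j = d then (1 : ℝ) else 0

/-- The Frobenius inner product `⟨B, C⟩ = Tr(Bᵀ C)`. -/
noncomputable def frob {n : Type*} [Fintype n] (B C : Matrix n n ℝ) : ℝ :=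
  (B.transpose * C).trace

open Finset

/-- The vector supported on level `t` of the spider, with value `1` at the root if `t = 0` and
`r ^ t / k` on the vertices at distance `t ≥ 1` from the root; it is zero for `t > l`. -/
noncomputable def levelVec (k l : ℕ) (r : ℝ) (t : ℕ) : Spider k l → ℝ
  | none => if t = 0 then 1 else 0
  | some (_, s) => if (s : ℕ) + 1 = t then r ^ t / k else 0

/-- The bilinear form of the distance-`d` adjacency matrix. -/
noncomputable def distForm (k l d : ℕ) (u v : Spider k l → ℝ) : ℝ :=
  ∑ i, ∑ j, u i * v j * (if spiderDist i j = d then 1 else 0)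

lemma frob_vecMulVec (k l d : ℕ) (u v : Spider k l → ℝ) :
    frob (Matrix.vecMulVec u v) (spiderA k l d) = distForm k l d u v := by
  unfold frob distForm spiderA
  simp only [Matrix.trace, Matrix.diag, Matrix.mul_apply, Matrix.transpose_apply,
    Matrix.vecMulVec_apply, Matrix.of_apply]
  exact Finset.sum_comm

lemma frob_add {n : Type*} [Fintype n] (B C A : Matrix n n ℝ) :
    frob (B + C) A = frob B A + frob C A := by
  simp [frob, Matrix.add_mul]

lemma frob_smul {n : Type*} [Fintype n] (c : ℝ) (B A : Matrix n n ℝ) :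
    frob (c • B) A = c * frob B A := by
  simp [frob]

lemma frob_sum {n ι : Type*} [Fintype n] (s : Finset ι) (B : ι → Matrix n n ℝ)
    (A : Matrix n n ℝ) : frob (∑ i ∈ s, B i) A = ∑ i ∈ s, frob (B i) A := by
  simp [frob, Matrix.transpose_sum, Matrix.sum_mul, Matrix.trace_sum]

lemma spiderDist_comm {k l : ℕ} (i j : Spider k l) : spiderDist i j = spiderDist j i := by
  rcases i with _ | ⟨a, t⟩ <;> rcases j with _ | ⟨b, s⟩ <;> simp only [spiderDist]
  rw [Nat.dist_comm, Nat.add_comm (t : ℕ) s]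
  simp only [eq_comm]

lemma distForm_comm (k l d : ℕ) (u v : Spider k l → ℝ) :
    distForm k l d u v = distForm k l d v u := by
  unfold distForm
  rw [Finset.sum_comm]
  simp only [spiderDist_comm, mul_comm]

lemma distForm_add_smul (k l d : ℕ) (a b : ℝ) (u v : Spider k l → ℝ) :
    distForm k l d (a • u + b • v) (a • u + b • v) =
      a ^ 2 * distForm k l d u u + 2 * a * b * distForm k l d u v + b ^ 2 * distForm k l d v v := by
  have h : 2 * a * b * distForm k l d u v =
      a * b * distForm k l d u v + a * b * distForm k l d v u := by
    rw [distForm_comm k l d v u]; ring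
  rw [h]
  simp only [distForm, Finset.mul_sum, ← Finset.sum_add_distrib, Pi.add_apply, Pi.smul_apply,
    smul_eq_mul]
  refine Finset.sum_congr rfl fun i _ => Finset.sum_congr rfl fun j _ => ?_
  ring

lemma distForm_root_root (k l d : ℕ) (r : ℝ) :
    distForm k l d (levelVec k l r 0) (levelVec k l r 0) = if d = 0 then 1 else 0 := by
  simp [distForm, levelVec, Fintype.sum_option, spiderDist, eq_comm]

lemma sum_levelVec_mul (k l : ℕ) (r : ℝ) (t : ℕ) (ht : t < l) (G : Spider k l → ℝ) :
    ∑ i, levelVec k l r (t + 1) i * G i =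
      ∑ a : Fin k, r ^ (t + 1) / k * G (some (a, ⟨t, ht⟩)) := by
  have h : ∀ x : Fin l, ((x : ℕ) = t) ↔ x = ⟨t, ht⟩ := fun x => by simp [Fin.ext_iff]
  simp [Fintype.sum_option, Fintype.sum_prod_type, levelVec, h]

lemma levelVec_eq_zero (k l : ℕ) (r : ℝ) (t : ℕ) (ht : ¬ t < l) : levelVec k l r (t + 1) = 0 := by
  funext i
  rcases i with _ | ⟨a, s⟩
  · simp [levelVec]
  · have : (s : ℕ) ≠ t := by omega
    simp [levelVec, this]

lemma distForm_root_level (k l d : ℕ) (r : ℝ) (hk : (k : ℝ) ≠ 0) (t : ℕ) :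
    distForm k l d (levelVec k l r 0) (levelVec k l r (t + 1)) =
      if t < l ∧ d = t + 1 then r ^ (t + 1) else 0 := by
  by_cases ht : t < l
  · simp only [distForm, mul_assoc, mul_left_comm (levelVec k l r 0 _), sum_levelVec_mul k l r t ht]
    simp only [Fintype.sum_option, Fintype.sum_prod_type, levelVec, spiderDist]
    simp [ht, eq_comm]
    split_ifs
    · field_simp
    · rfl
  · simp [distForm, levelVec_eq_zero k l r t ht, ht]

/-- Both vertices on levels at least `1`: either on the same arm (`k` pairs) or on two distinct
arms (`k (k - 1)` pairs). -/
lemma distForm_level_level (k l d : ℕ) (r : ℝ) (hk : (k : ℝ) ≠ 0) (t s : ℕ) :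
    distForm k l d (levelVec k l r (t + 1)) (levelVec k l r (s + 1)) =
      if t < l ∧ s < l then r ^ (t + s + 2) / k *
        ((if Nat.dist t s = d then 1 else 0) + (k - 1) * (if t + s + 2 = d then 1 else 0))
      else 0 := by
  by_cases ht : t < l
  · by_cases hs : s < l
    · have h3 : ∀ a b : Fin k,
          (if (if a = b then Nat.dist t s else t + s + 2) = d then (1 : ℝ) else 0) =
          (if a = b then
            ((if Nat.dist t s = d then 1 else 0) - (if t + s + 2 = d then 1 else 0)) else 0) +
            (if t + s + 2 = d then 1 else 0) := by
        intro a b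
        split_ifs <;> simp
      simp only [distForm, mul_assoc, ← Finset.mul_sum, sum_levelVec_mul k l r t ht,
        sum_levelVec_mul k l r s hs, spiderDist, h3, Finset.sum_add_distrib, Finset.sum_ite_eq,
        Finset.mem_univ, if_true, Finset.sum_const, Finset.card_univ, Fintype.card_fin,
        nsmul_eq_mul, ht, hs, and_self]
      field_simp
      ring
    · simp [distForm, levelVec_eq_zero k l r s hs, hs]
  · simp [distForm, levelVec_eq_zero k l r t ht, ht]

/-- The sum of squares with parameters `γ` and `δ`. -/
noncomputable def spiderPsi (k l : ℕ) (r γ δ : ℝ) : Matrix (Spider k l) (Spider k l) ℝ :=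
  let e := levelVec k l r
  let sq := fun u : Spider k l → ℝ => Matrix.vecMulVec u u
  (1 / 4 : ℝ) • ∑ t ∈ range l, sq ((1 : ℝ) • e (t + 1) + (-1 : ℝ) • e (t + 3)) +
    sq ((1 / 2 : ℝ) • e 1 + (1 : ℝ) • e 0) + sq ((1 / 2 : ℝ) • e 2 + (-2 * γ) • e 0) + δ • sq (e 0)

lemma spiderPsi_posSemidef (k l : ℕ) (r γ δ : ℝ) (hδ : 0 ≤ δ) :
    (spiderPsi k l r γ δ).PosSemidef := by
  have h : ∀ u : Spider k l → ℝ, (Matrix.vecMulVec u u).PosSemidef := fun u => by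
    simpa using Matrix.posSemidef_vecMulVec_self_star u
  unfold spiderPsi
  refine ((((Matrix.posSemidef_sum _ fun t _ => h _).smul (by norm_num)).add (h _)).add
    (h _)).add ((h _).smul hδ)

/-- The value of `⟨Ψ, A^(d)⟩` after collecting the diagonal terms of all squares into
`½ ∑_{t=1}^{l} B_d(e_t, e_t)`. -/
lemma frob_spiderPsi (k l d : ℕ) (r γ δ : ℝ) (hk : (k : ℝ) ≠ 0) :
    frob (spiderPsi k l r γ δ) (spiderA k l d) =
      1 / 2 * (∑ t ∈ range l, r ^ (2 * t + 2) / k *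
        ((if d = 0 then 1 else 0) + (k - 1) * (if 2 * t + 2 = d then 1 else 0))) -
      1 / 2 * (∑ t ∈ range l, if t + 2 < l then r ^ (2 * t + 4) / k *
        ((if d = 2 then 1 else 0) + (k - 1) * (if 2 * t + 4 = d then 1 else 0)) else 0) +
      (if 0 < l ∧ d = 1 then r else 0) - 2 * γ * (if 1 < l ∧ d = 2 then r ^ 2 else 0) +
      (1 + 4 * γ ^ 2 + δ) * (if d = 0 then 1 else 0) := by
  set e := levelVec k l r with he
  have hdiag : ∀ t, distForm k l d (e (t + 1)) (e (t + 1)) = if t < l then r ^ (2 * t + 2) / k *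
        ((if d = 0 then 1 else 0) + (k - 1) * (if 2 * t + 2 = d then 1 else 0)) else 0 := by
    intro t
    rw [he, distForm_level_level k l d r hk]
    simp [Nat.dist_self, two_mul, eq_comm]
  have hoff : ∀ t, distForm k l d (e (t + 1)) (e (t + 3)) = if t + 2 < l then
      r ^ (2 * t + 4) / k *
        ((if d = 2 then 1 else 0) + (k - 1) * (if 2 * t + 4 = d then 1 else 0)) else 0 := by
    intro t
    rw [he, distForm_level_level k l d r hk t (t + 2)]
    have h1 : Nat.dist t (t + 2) = 2 := by simp [Nat.dist]
    have h2 : t + (t + 2) + 2 = 2 * t + 4 := by ring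
    have h3 : (t < l ∧ t + 2 < l) ↔ t + 2 < l := by omega
    rw [h1, h2]
    simp only [h3, eq_comm]
  -- The diagonal terms shifted by two levels, using that `e_t = 0` for `t > l`.
  have hshift : (∑ t ∈ range l, distForm k l d (e (t + 3)) (e (t + 3))) +
      distForm k l d (e 1) (e 1) + distForm k l d (e 2) (e 2) =
      ∑ t ∈ range l, distForm k l d (e (t + 1)) (e (t + 1)) := by
    have h1 := Finset.sum_range_succ' (fun t => distForm k l d (e (t + 1)) (e (t + 1))) (l + 1)
    rw [Finset.sum_range_succ' _ l, Finset.sum_range_succ, Finset.sum_range_succ] at h1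
    have hl0 := hdiag l
    have hl1 := hdiag (l + 1)
    rw [if_neg (by omega)] at hl0 hl1
    rw [hl0, hl1] at h1
    simp only [Nat.zero_add, add_zero] at h1
    rw [h1]
    norm_num [add_assoc]
    ring
  have h01 := distForm_root_level k l d r hk 0
  have h02 := distForm_root_level k l d r hk 1
  have hd1 : (∑ t ∈ range l, r ^ (2 * t + 2) / k *
        ((if d = 0 then 1 else 0) + (k - 1) * (if 2 * t + 2 = d then 1 else 0))) =
      ∑ t ∈ range l, distForm k l d (e (t + 1)) (e (t + 1)) := by
    refine Finset.sum_congr rfl fun t ht => ?_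
    rw [hdiag, if_pos (Finset.mem_range.mp ht)]
  rw [hd1, ← Finset.sum_congr rfl fun t _ => hoff t]
  norm_num at h01 h02
  rw [← h01, ← h02, ← distForm_root_root k l d r, ← he]
  unfold spiderPsi
  simp only [frob_add, frob_smul, frob_sum, frob_vecMulVec, distForm_add_smul]
  rw [← he, distForm_comm k l d (e 1) (e 0), distForm_comm k l d (e 2) (e 0)]
  simp only [Finset.sum_add_distrib, ← Finset.mul_sum]
  linear_combination (1 / 4 : ℝ) * hshift

theorem spider_technical_cor (k l : ℕ) (hl : 1 ≤ l) (hk : 3 ^ l ≤ k) :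
    ∃ Ψ : Matrix (Spider k l) (Spider k l) ℝ, Ψ.PosSemidef ∧
      (3 / 2 ≤ frob Ψ (spiderA k l 0) ∧ frob Ψ (spiderA k l 0) ≤ 2) ∧
      frob Ψ (spiderA k l 1) = (k : ℝ) ^ ((1 : ℝ) / (2 * (l : ℝ))) ∧
      (∀ d : ℕ, 1 < d → d < 2 * l → frob Ψ (spiderA k l d) = 0) ∧
      frob Ψ (spiderA k l (2 * l)) = ((k : ℝ) - 1) / 2 := by
  have hk' : (3 : ℝ) ^ l ≤ k := by exact_mod_cast hk
  have hk3 : (3 : ℝ) ≤ k := by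
    calc (3 : ℝ) = 3 ^ 1 := by norm_num
      _ ≤ 3 ^ l := pow_le_pow_right₀ (by norm_num) hl
      _ ≤ k := hk'
  have hk0 : (k : ℝ) ≠ 0 := by positivity
  have hkpos : (0 : ℝ) < k := by linarith
  set r : ℝ := (k : ℝ) ^ ((1 : ℝ) / (2 * (l : ℝ))) with hr
  have hr0 : 0 < r := Real.rpow_pos_of_pos hkpos _
  have hrk : r ^ (2 * l) = k := by
    rw [hr, ← Real.rpow_natCast, ← Real.rpow_mul hkpos.le]
    have : (l : ℝ) ≠ 0 := by positivity
    push_cast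
    rw [one_div_mul_cancel (by positivity), Real.rpow_one]
  have hr3 : 3 ≤ r ^ 2 := by
    by_contra! h
    have := pow_lt_pow_left₀ h (by positivity) (by omega : l ≠ 0)
    rw [← pow_mul, hrk] at this
    linarith
  set T : ℝ := ∑ t ∈ range l, r ^ (2 * t + 2) / k with hT
  have hT32 : T ≤ 3 / 2 := by
    have h1 : T = r ^ 2 / k * ∑ t ∈ range l, (r ^ 2) ^ t := by
      rw [hT, Finset.mul_sum]
      refine Finset.sum_congr rfl fun t _ => ?_
      ring
    have h2 := geom_sum_mul (r ^ 2) l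
    rw [← pow_mul, hrk] at h2
    have h3 : T * (r ^ 2 - 1) = r ^ 2 * ((k - 1) / k) := by
      rw [h1, mul_assoc, h2]; ring
    have h4 : ((k : ℝ) - 1) / k ≤ 1 := by rw [div_le_one hkpos]; linarith
    nlinarith
  set S : ℝ := ∑ t ∈ range l, if t + 2 < l then r ^ (2 * t + 4) / k else 0 with hS
  have hS0 : 0 ≤ S := Finset.sum_nonneg fun t _ => by split_ifs <;> positivity
  have hST : S ≤ r ^ 2 * T := by
    rw [hS, hT, Finset.mul_sum]
    refine Finset.sum_le_sum fun t _ => ?_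
    split_ifs
    · exact le_of_eq (by ring)
    · positivity
  -- The choice of `γ` that solves the equation for `d = 2`.
  set γ : ℝ := ((k - 1) / k - S / r ^ 2) / 4 with hγ
  have hγ4 : 4 * γ ^ 2 ≤ 1 / 4 := by
    have h1 : S / r ^ 2 ≤ 3 / 2 := by
      rw [div_le_iff₀ (by positivity)]; nlinarith
    have h2 : 0 ≤ S / r ^ 2 := by positivity
    have h3 : ((k : ℝ) - 1) / k ≤ 1 := by rw [div_le_one hkpos]; linarith
    have h4 : 2 / 3 ≤ ((k : ℝ) - 1) / k := by rw [le_div_iff₀ hkpos]; linarith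
    have h5 : γ ≤ 1 / 4 := by rw [hγ]; linarith
    have h6 : -(1 / 4) ≤ γ := by rw [hγ]; linarith
    nlinarith
  set δ : ℝ := 1 - 4 * γ ^ 2 - T / 2 with hδ
  have hδ0 : 0 ≤ δ := by rw [hδ]; linarith
  have h0 : frob (spiderPsi k l r γ δ) (spiderA k l 0) = 2 := by
    rw [frob_spiderPsi k l 0 r γ δ hk0]
    simp
    rw [← hT, hδ]
    ring
  refine ⟨spiderPsi k l r γ δ, spiderPsi_posSemidef k l r γ δ hδ0, ⟨by rw [h0]; norm_num, h0.le⟩,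
    ?_, ?_, ?_⟩
  · rw [frob_spiderPsi k l 1 r γ δ hk0]
    have h3 : 0 < l := hl
    simp [h3]
  · intro d hd1 hd2
    rw [frob_spiderPsi k l d r γ δ hk0]
    have hd0 : d ≠ 0 := by omega
    have hd1' : d ≠ 1 := by omega
    by_cases h2 : d = 2
    · subst h2
      have hl2 : 1 < l := by omega
      simp [hl2, show 0 < l from hl]
      rw [← hS, hγ]
      field_simp
      ring
    · simp only [hd0, hd1', h2, if_false, and_false, zero_add, mul_zero, add_zero, sub_zero]
      rw [← mul_sub]
      refine mul_eq_zero_of_right _ (sub_eq_zero.mpr ?_)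
      rcases Nat.even_or_odd' d with ⟨m, rfl | rfl⟩
      · -- Both sums have one nonzero term: `t = m - 1` on the left and `t = m - 2` on the right.
        obtain ⟨n, rfl⟩ : ∃ n, m = n + 2 := ⟨m - 2, by omega⟩
        rw [Finset.sum_eq_single (n + 1), Finset.sum_eq_single n]
        · rw [if_pos (by omega), if_pos (by omega), if_pos (by omega)]
          ring
        · intro t _ ht
          rw [if_neg (show ¬ 2 * t + 4 = 2 * (n + 2) by omega)]
          simp
        · intro h; exact absurd (Finset.mem_range.mpr (by omega)) h
        · intro t _ ht
          rw [if_neg (by omega)]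
          simp
        · intro h; exact absurd (Finset.mem_range.mpr (by omega)) h
      · rw [Finset.sum_eq_zero, Finset.sum_eq_zero]
        · intro t _
          rw [if_neg (show ¬ 2 * t + 4 = 2 * m + 1 by omega)]
          simp
        · intro t _
          rw [if_neg (by omega)]
          simp
  · rw [frob_spiderPsi k l (2 * l) r γ δ hk0]
    have hd0 : 2 * l ≠ 0 := by omega
    have hd1' : 2 * l ≠ 1 := by omega
    have hd2 : ¬ (1 < l ∧ 2 * l = 2) := by omega
    simp only [hd0, hd1', hd2, if_false, and_false, zero_add, mul_zero, add_zero, sub_zero]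
    rw [Finset.sum_eq_single (l - 1), Finset.sum_eq_zero]
    · rw [if_pos (by omega), show 2 * (l - 1) + 2 = 2 * l by omega, hrk]
      field_simp
      ring
    · intro t _
      split_ifs <;> first | omega | simp
    · intro t _ ht
      rw [if_neg (by omega)]
      simp
    · intro h; exact absurd (Finset.mem_range.mpr (by omega)) h
end

section
/- Let ρ and ε be real numbers with 0 < ρ < ε ≤ 1/√3. Set ℓ = ⌈ ln(1/(ε²π_*)) / (4 ln(ε/ρ)) ⌉, k = ⌈ (1/ε)^{2ℓ} ⌉, and R = kℓ + 1, and suppose that the ℓ²→ℓ² operator norm of K̄^{2ℓ} is at most ρ^{2ℓ}. Then both of the symmetric matrices (5ε/2)·Π − (1/m)(Ξ∘A) and (5ε/2)·Π + (1/m)(Ξ∘A) are R-local sums of PSD matrices. In particular, for every x ∈ {−1,+1}^V one has |Σ_{u,v} Ξ_{uv}A_{uv}x_ux_v| ≤ (5ε/2)·m, so the fraction of satisfied constraints of the 2-XOR instance, (1/2) + (1/(2m))Σ_{u,v} Ξ_{uv}A_{uv}x_ux_v, is at most 1/2 + (5/4)ε. -/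
/-!
Write `Kb` for the signed transition matrix. A polynomial `q` is called local if the matrix
`Π q(Kb)` is a local sum of PSD matrices; for `q = 5 ε / 2 - X` this is the first claim, since
`Π Kb = (1 / m) (Ξ ∘ A)`, and the second claim is the first one for the signs `-Ξ`.

Two sources of local polynomials are used. If the absolute row sums of `Kb ^ t` are at most `a`,
then `a ± X ^ t` is local, because diagonally dominant matrices are sums of PSD matrices on two
coordinates (`isLocalPSDSum_const_sub_pow`). With `a = 1` this applies to every `t`; for `t = 2 l`
the hypothesis on the operator norm and the choice of `l` allow `a = ε ^ (2 l + 1)`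
(`walk_length_bound`). Secondly, squaring a combination of the signed endpoints of independent
random walks from a common stationary root and taking expectations shows that
`(∑ i, c i X ^ t i)² + ∑ i, c i ² (1 - X ^ (2 t i))` is local, on as many coordinates as there are
walks (`isLocalPSDSum_walks`). Replacing each monomial by an average over `k` walks makes the second
term of order `1 / k ≤ ε ^ (2 l)`, which gives squares `(a X ^ i - b X ^ j)²` up to a small constant.
Only endpoints enter, so `2 k ≤ k l + 1` coordinates suffice when `l ≥ 2`; when `l = 1` the single
square `(1 - X / ε)²` is needed, on `k + 1` coordinates.

With `w = X / ε`, the inequalities `w ≤ (1 + w²) / 2` and `l w² ≤ (l - 1) + w ^ (2 l)` have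
sum-of-squares proofs with such squares (`amgm_sos`). Together with `w ^ (2 l) ≤ ε` they bound `w`
by `1` plus the accumulated errors, which stay below `3 / 2` as `ε² ≤ 1 / 3`
(`isLocalPSDSum_sub_X`).
-/

section WeightedGraph

variable {V : Type*} [Fintype V] [DecidableEq V] [Nonempty V]

/-- The (weighted) degree `deg(u) = ∑_v A_{uv}` of a weighted graph `A`. -/
noncomputable def gdeg (A : Matrix V V ℝ) (u : V) : ℝ := ∑ v, A u v

/-- The total weight `m = ∑_u deg(u)`. -/
noncomputable def gm (A : Matrix V V ℝ) : ℝ := ∑ u, gdeg A u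

/-- The stationary distribution `π(u) = deg(u)/m` of the random walk on `A`. -/
noncomputable def gpi (A : Matrix V V ℝ) (u : V) : ℝ := gdeg A u / gm A

/-- `π_* = min_u π(u)`. -/
noncomputable def gpiStar (A : Matrix V V ℝ) : ℝ :=
  Finset.univ.inf' Finset.univ_nonempty (gpi A)

/-- The random-walk transition matrix `K = D⁻¹A`, i.e. `K_{uv} = A_{uv}/deg(u)`. -/
noncomputable def gK (A : Matrix V V ℝ) : Matrix V V ℝ :=
  Matrix.of fun u v => A u v / gdeg A u

/-- The `ℓ² → ℓ²` operator norm (spectral norm) of a real square matrix. -/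
noncomputable def l2opNorm (M : Matrix V V ℝ) : ℝ :=
  ‖Matrix.toEuclideanCLM (𝕜 := ℝ) M‖

/-- A symmetric matrix `M` is an `R`-local sum of PSD matrices if it is a finite sum
`M = ∑ i, M_i` of positive semidefinite matrices, each supported on a set `S_i` of at
most `R` rows/columns.  This is exactly derivability of `xᵀMx ≥ 0` in the `R`-local,
degree-2 static sum-of-squares proof system. -/
def IsLocalPSDSum (R : ℕ) (M : Matrix V V ℝ) : Prop :=
  ∃ (n : ℕ) (Ms : Fin n → Matrix V V ℝ) (Ss : Fin n → Finset V),
    M = ∑ i, Ms i ∧ (∀ i, (Ms i).PosSemidef) ∧ (∀ i, (Ss i).card ≤ R) ∧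
    (∀ i u v, Ms i u v ≠ 0 → u ∈ Ss i ∧ v ∈ Ss i)

end WeightedGraph

open Matrix Polynomial

set_option linter.unusedSectionVars false

/-! ### Local sums of PSD matrices -/

section Local
variable {V : Type*} [Fintype V] [DecidableEq V]


lemma IsLocalPSDSum.of_fintype {ι : Type*} [Fintype ι] {R : ℕ} (Ms : ι → Matrix V V ℝ)
    (Ss : ι → Finset V) (hpsd : ∀ i, (Ms i).PosSemidef) (hcard : ∀ i, (Ss i).card ≤ R)
    (hsupp : ∀ i u v, Ms i u v ≠ 0 → u ∈ Ss i ∧ v ∈ Ss i) :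
    IsLocalPSDSum R (∑ i, Ms i) := by
  refine ⟨Fintype.card ι, fun i => Ms ((Fintype.equivFin ι).symm i),
    fun i => Ss ((Fintype.equivFin ι).symm i), ?_, fun i => hpsd _, fun i => hcard _,
    fun i => hsupp _⟩
  exact (Equiv.sum_comp (Fintype.equivFin ι).symm Ms).symm

lemma IsLocalPSDSum.zero (R : ℕ) : IsLocalPSDSum R (0 : Matrix V V ℝ) :=
  ⟨0, fun _ => 0, fun _ => ∅, by simp, fun i => i.elim0, fun i => i.elim0, fun i => i.elim0⟩

lemma IsLocalPSDSum.add {R : ℕ} {M N : Matrix V V ℝ} (hM : IsLocalPSDSum R M)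
    (hN : IsLocalPSDSum R N) : IsLocalPSDSum R (M + N) := by
  obtain ⟨n, Ms, Ss, rfl, h1, h2, h3⟩ := hM
  obtain ⟨n', Ms', Ss', rfl, h1', h2', h3'⟩ := hN
  have := IsLocalPSDSum.of_fintype (R := R) (Sum.elim Ms Ms') (Sum.elim Ss Ss')
    (by rintro (i | i) <;> simp [h1, h1']) (by rintro (i | i) <;> simp [h2, h2'])
    (by rintro (i | i) <;> simpa using by first | exact h3 i | exact h3' i)
  simpa using this

lemma IsLocalPSDSum.smul {R : ℕ} {M : Matrix V V ℝ} (hM : IsLocalPSDSum R M) {c : ℝ}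
    (hc : 0 ≤ c) : IsLocalPSDSum R (c • M) := by
  obtain ⟨n, Ms, Ss, rfl, h1, h2, h3⟩ := hM
  refine ⟨n, fun i => c • Ms i, Ss, by rw [Finset.smul_sum], fun i => (h1 i).smul hc, h2, ?_⟩
  intro i u v h
  exact h3 i u v fun h0 => h (by simp [h0])

lemma IsLocalPSDSum.sum {ι : Type*} {R : ℕ} (s : Finset ι) {M : ι → Matrix V V ℝ}
    (h : ∀ i ∈ s, IsLocalPSDSum R (M i)) : IsLocalPSDSum R (∑ i ∈ s, M i) :=
  Finset.sum_induction _ _ (fun _ _ => IsLocalPSDSum.add) (IsLocalPSDSum.zero R) h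

lemma IsLocalPSDSum.mono {R R' : ℕ} (hR : R ≤ R') {M : Matrix V V ℝ}
    (hM : IsLocalPSDSum R M) : IsLocalPSDSum R' M := by
  obtain ⟨n, Ms, Ss, h0, h1, h2, h3⟩ := hM
  exact ⟨n, Ms, Ss, h0, h1, fun i => (h2 i).trans hR, h3⟩

lemma IsLocalPSDSum.vecMulVec {R : ℕ} (y : V → ℝ) (S : Finset V) (hy : ∀ v, y v ≠ 0 → v ∈ S)
    (hS : S.card ≤ R) : IsLocalPSDSum R (vecMulVec y y) := by
  refine ⟨1, fun _ => Matrix.vecMulVec y y, fun _ => S, by simp, fun _ => ?_, fun _ => hS, ?_⟩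
  · simpa using Matrix.posSemidef_vecMulVec_self_star y
  · intro _ u v h
    change y u * y v ≠ 0 at h
    exact ⟨hy u (left_ne_zero_of_mul h), hy v (right_ne_zero_of_mul h)⟩

/-- Quadratic forms of local PSD sums are nonnegative. -/
lemma IsLocalPSDSum.quadratic_nonneg {R : ℕ} {M : Matrix V V ℝ} (hM : IsLocalPSDSum R M)
    (x : V → ℝ) : 0 ≤ x ⬝ᵥ (M *ᵥ x) := by
  obtain ⟨n, Ms, Ss, rfl, h1, -, -⟩ := hM
  rw [Matrix.sum_mulVec, dotProduct_sum]
  exact Finset.sum_nonneg fun i _ => by simpa using (h1 i).dotProduct_mulVec_nonneg x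

/-- `diagonal d - M` is, when `d` dominates the absolute row sums of the symmetric matrix `M`,
a sum of PSD matrices on at most two coordinates: each entry `a` of `M` is absorbed by a form
`(|a| / 2) (x_u ∓ x_v)²`. -/
lemma IsLocalPSDSum.of_dominant {R : ℕ} (hR : 2 ≤ R) (d : V → ℝ) (M : Matrix V V ℝ)
    (hM : M.IsSymm) (hd : ∀ u, ∑ v, |M u v| ≤ d u) :
    IsLocalPSDSum R (diagonal d - M) := by
  have key : diagonal d - M
      = ∑ u, ∑ v, (|M u v| / 2) • Matrix.vecMulVec
          (Pi.single u (1 : ℝ) - Pi.single v (SignType.sign (M u v) : ℝ) : V → ℝ)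
          (Pi.single u (1 : ℝ) - Pi.single v (SignType.sign (M u v) : ℝ) : V → ℝ)
        + ∑ u, (d u - ∑ v, |M u v|) • Matrix.vecMulVec (Pi.single u (1 : ℝ) : V → ℝ)
          (Pi.single u (1 : ℝ)) := by
    ext a b
    have e : ∀ u v : V, |M u v| / 2 * (((if a = u then 1 else 0)
          - if a = v then (SignType.sign (M u v) : ℝ) else 0)
          * ((if b = u then 1 else 0) - if b = v then (SignType.sign (M u v) : ℝ) else 0))
        = (if a = u then if b = u then |M u v| / 2 else 0 else 0)
          - (if a = u then if b = v then M u v / 2 else 0 else 0)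
          - (if b = u then if a = v then M u v / 2 else 0 else 0)
          + (if a = v then if b = v then |M u v| / 2 else 0 else 0) := by
      intro u v
      have h1 : |M u v| * SignType.sign (M u v) = M u v := abs_mul_sign _
      have h2 : M u v * SignType.sign (M u v) = |M u v| := self_mul_sign _
      generalize (SignType.sign (M u v) : ℝ) = t at *
      split_ifs <;> grind
    simp only [Matrix.add_apply, Matrix.sub_apply, Matrix.sum_apply, Matrix.smul_apply,
      vecMulVec_apply, Pi.sub_apply, smul_eq_mul, Pi.single_apply, e, Finset.sum_add_distrib,
      Finset.sum_sub_distrib]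
    have hs : ∀ u v, M u v = M v u := fun u v => hM.apply v u
    by_cases hab : a = b
    · subst hab
      simp [Finset.sum_ite_eq, Finset.sum_ite_irrel, ← Finset.sum_div, hs _ a]
      ring
    · simp [hab, Finset.sum_ite_irrel, hs b a]
      simp [Ne.symm hab]
      ring
  rw [key]
  refine .add (.sum _ fun u _ => .sum _ fun v _ => .smul (.vecMulVec _ {u, v} ?_ ?_) (by positivity))
    (.sum _ fun u _ => .smul (.vecMulVec _ {u} ?_ ?_) (sub_nonneg.2 (hd u)))
  · intro w hw
    by_contra h
    simp only [Finset.mem_insert, Finset.mem_singleton, not_or] at h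
    simp [h.1, h.2] at hw
  · exact Finset.card_le_two.trans hR
  · intro w hw
    by_contra h
    simp only [Finset.mem_singleton] at h
    simp [h] at hw
  · simp; omega

/-- Averaging over independent one-coordinate random vectors. If the `Y i` (`i ∈ s`) are independent,
`Y i = Y i ω` with probability `P i ω`, then for a fixed vector `y` the second-moment matrix of
`y + ∑ i ∈ s, Y i` is the square of the mean plus the sum of the covariances of the `Y i`; each
outcome contributes a rank-one PSD matrix supported on few coordinates. -/
lemma IsLocalPSDSum.of_independent {ι Ω : Type*} [DecidableEq ι] [Fintype Ω] (P : ι → Ω → ℝ)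
    (hP0 : ∀ i ω, 0 ≤ P i ω) (hP1 : ∀ i, ∑ ω, P i ω = 1) (Y : ι → Ω → V → ℝ) (b : Ω → V)
    (hY : ∀ i ω v, Y i ω v ≠ 0 → v = b ω) (m : ι → V → ℝ)
    (hm : ∀ i v, ∑ ω, P i ω * Y i ω v = m i v) (s : Finset ι) :
    ∀ (y : V → ℝ) (S : Finset V), (∀ v, y v ≠ 0 → v ∈ S) →
      IsLocalPSDSum (S.card + s.card)
        (Matrix.vecMulVec (y + ∑ i ∈ s, m i) (y + ∑ i ∈ s, m i)
          + ∑ i ∈ s, (∑ ω, P i ω • Matrix.vecMulVec (Y i ω) (Y i ω)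
            - Matrix.vecMulVec (m i) (m i))) := by
  induction s using Finset.induction_on with
  | empty =>
    intro y S hy
    simpa using IsLocalPSDSum.vecMulVec y S hy le_rfl
  | insert i s hi ih =>
    intro y S hy
    have h : ∀ ω, IsLocalPSDSum (S.card + (insert i s).card)
        (Matrix.vecMulVec (y + Y i ω + ∑ j ∈ s, m j) (y + Y i ω + ∑ j ∈ s, m j)
          + ∑ j ∈ s, (∑ ω, P j ω • Matrix.vecMulVec (Y j ω) (Y j ω)
            - Matrix.vecMulVec (m j) (m j))) := by
      intro ω
      refine (ih (y + Y i ω) (insert (b ω) S) ?_).mono ?_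
      · intro v hv
        by_contra hn
        simp only [Finset.mem_insert, not_or] at hn
        apply hv
        have h1 : y v = 0 := by_contra fun h => hn.2 (hy v h)
        have h2 : Y i ω v = 0 := by_contra fun h => hn.1 (hY i ω v h)
        simp [h1, h2]
      · rw [Finset.card_insert_of_notMem hi]
        have := Finset.card_insert_le (b ω) S
        omega
    convert IsLocalPSDSum.sum Finset.univ fun ω _ => (h ω).smul (hP0 i ω) using 1
    ext u v
    rw [Finset.sum_insert hi, Finset.sum_insert hi]
    generalize ∑ j ∈ s, (∑ ω, P j ω • Matrix.vecMulVec (Y j ω) (Y j ω)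
            - Matrix.vecMulVec (m j) (m j)) = Q
    generalize ∑ j ∈ s, m j = N
    simp only [Matrix.add_apply, Matrix.sub_apply, Matrix.sum_apply, Matrix.smul_apply,
      vecMulVec_apply, Pi.add_apply, smul_eq_mul]
    have e : ∀ ω, P i ω * ((y u + Y i ω u + N u) * (y v + Y i ω v + N v) + Q u v)
        = P i ω * ((y u + N u) * (y v + N v) + Q u v) + (y u + N u) * (P i ω * Y i ω v)
          + (y v + N v) * (P i ω * Y i ω u) + P i ω * (Y i ω u * Y i ω v) := fun ω => by ring
    simp only [e, Finset.sum_add_distrib, ← Finset.sum_mul, ← Finset.mul_sum, hm, hP1]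
    ring

end Local

/-! ### Random walks and polynomials in the signed transition matrix -/

section Walk
variable {V : Type*} [Fintype V] [DecidableEq V]

lemma abs_signed_pow_le {K Kb : Matrix V V ℝ} (hK : ∀ u v, |Kb u v| ≤ K u v) (t : ℕ) (u v : V) :
    |(Kb ^ t) u v| ≤ (K ^ t) u v := by
  induction t generalizing v with
  | zero =>
    by_cases h : u = v <;> simp [h]
  | succ t ih =>
    rw [pow_succ, pow_succ, Matrix.mul_apply, Matrix.mul_apply]
    refine (Finset.abs_sum_le_sum_abs _ _).trans (Finset.sum_le_sum fun w _ => ?_)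
    rw [abs_mul]
    exact mul_le_mul (ih w) (hK w v) (abs_nonneg _) ((abs_nonneg _).trans (ih w))

lemma sum_pow_row {K : Matrix V V ℝ} (h1 : ∀ u, ∑ v, K u v = 1) (t : ℕ) (u : V) :
    ∑ v, (K ^ t) u v = 1 := by
  induction t generalizing u with
  | zero => simp [Matrix.one_apply]
  | succ t ih =>
    simp only [pow_succ', Matrix.mul_apply]
    rw [Finset.sum_comm]
    simp [← Finset.mul_sum, ih, h1]

lemma stationary_pow {K : Matrix V V ℝ} {p : V → ℝ} (hst : ∀ v, ∑ u, p u * K u v = p v) (t : ℕ)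
    (v : V) : ∑ u, p u * (K ^ t) u v = p v := by
  induction t generalizing v with
  | zero => simp [Matrix.one_apply]
  | succ t ih =>
    simp only [pow_succ, Matrix.mul_apply, Finset.mul_sum]
    rw [Finset.sum_comm]
    simp only [← mul_assoc, ← Finset.sum_mul, ih, hst]

/-- Reversibility passes from the signed transition matrix to all polynomials in it. -/
lemma reversible_aeval {Kb : Matrix V V ℝ} {p : V → ℝ}
    (hrev : diagonal p * Kb = Kbᵀ * diagonal p) (q : ℝ[X]) :
    diagonal p * aeval Kb q = (aeval Kb q)ᵀ * diagonal p := by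
  have hpow : ∀ t : ℕ, diagonal p * Kb ^ t = (Kb ^ t)ᵀ * diagonal p := by
    intro t
    induction t with
    | zero => simp
    | succ t ih =>
      rw [pow_succ, ← mul_assoc, ih, mul_assoc, hrev, ← mul_assoc, ← Matrix.transpose_mul,
        ← pow_succ', pow_succ]
  induction q using Polynomial.induction_on' with
  | add q r hq hr => simp only [map_add, mul_add, hq, hr, Matrix.transpose_add, add_mul]
  | monomial t a =>
    simp only [aeval_monomial, Algebra.algebraMap_eq_smul_one, smul_mul_assoc, one_mul,
      Matrix.transpose_smul, mul_smul_comm, hpow]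

/-- The matrix of the quadratic form `x ↦ ⟨x, q(Kb) x⟩` in the inner product weighted by `p`, as a
linear function of the polynomial `q`. -/
noncomputable def walkForm (p : V → ℝ) (Kb : Matrix V V ℝ) : ℝ[X] →ₗ[ℝ] Matrix V V ℝ :=
  LinearMap.mulLeft ℝ (diagonal p) ∘ₗ (aeval Kb).toLinearMap

lemma walkForm_apply (p : V → ℝ) (Kb : Matrix V V ℝ) (q : ℝ[X]) :
    walkForm p Kb q = diagonal p * aeval Kb q := rfl

/-- By reversibility, `⟨x, q(Kb)² x⟩ = ⟨q(Kb) x, q(Kb) x⟩` in the weighted inner product. -/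
lemma mul_aeval_sq {Kb : Matrix V V ℝ} {p : V → ℝ}
    (hrev : diagonal p * Kb = Kbᵀ * diagonal p) (q : ℝ[X]) :
    diagonal p * aeval Kb (q ^ 2)
      = ∑ u, p u • Matrix.vecMulVec (aeval Kb q u) (aeval Kb q u) := by
  rw [pow_two, map_mul, ← mul_assoc, reversible_aeval hrev]
  ext a b
  rw [Matrix.mul_apply]
  simp only [Matrix.mul_diagonal, Matrix.transpose_apply, Matrix.sum_apply,
    Matrix.smul_apply, vecMulVec_apply, smul_eq_mul]
  exact Finset.sum_congr rfl fun u _ => by ring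

/-- The random-walk certificate. From a `p`-random root `u` run independent walks, the `i`-th of
length `t i`, and square `∑ i, c i * (sign of the walk) * x (endpoint)`. In expectation this is the
square of `∑ i, c i X ^ t i` plus the variances `c i ^ 2 (1 - X ^ (2 t i))`, evaluated at the signed
transition matrix. -/
lemma isLocalPSDSum_walks {ι : Type*} [Fintype ι] [DecidableEq ι] {K Kb : Matrix V V ℝ}
    {p : V → ℝ} (hp : ∀ u, 0 ≤ p u) (hK : ∀ u v, |Kb u v| ≤ K u v) (h1 : ∀ u, ∑ v, K u v = 1)
    (hst : ∀ v, ∑ u, p u * K u v = p v) (hrev : diagonal p * Kb = Kbᵀ * diagonal p)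
    (c : ι → ℝ) (t : ι → ℕ) :
    IsLocalPSDSum (Fintype.card ι) (walkForm p Kb
      ((∑ i, C (c i) * X ^ t i) ^ 2 + ∑ i, C (c i ^ 2) * (1 - (X ^ t i) ^ 2))) := by
  -- An outcome is an endpoint with a sign; `P u i (a, σ)` is the probability that the `i`-th walk
  -- from `u` ends at `a` with product of signs `σ`. It is nonnegative because `|Kb ^ t| ≤ K ^ t`.
  let sg : Bool → ℝ := fun σ => if σ then 1 else -1
  let P : V → ι → V × Bool → ℝ := fun u i ω =>
    ((K ^ t i) u ω.1 + sg ω.2 * (Kb ^ t i) u ω.1) / 2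
  let Y : ι → V × Bool → V → ℝ := fun i ω => Pi.single ω.1 (c i * sg ω.2)
  have hloc : ∀ u, IsLocalPSDSum (Fintype.card ι)
      (Matrix.vecMulVec (∑ i, c i • (Kb ^ t i) u) (∑ i, c i • (Kb ^ t i) u)
        + ∑ i, (c i ^ 2 • diagonal ((K ^ t i) u)
            - c i ^ 2 • Matrix.vecMulVec ((Kb ^ t i) u) ((Kb ^ t i) u))) := by
    intro u
    have hPY : ∀ i, ∑ ω, P u i ω • Matrix.vecMulVec (Y i ω) (Y i ω)
        = c i ^ 2 • diagonal ((K ^ t i) u) := by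
      intro i
      ext a b
      simp only [Matrix.sum_apply, Matrix.smul_apply, vecMulVec_apply, smul_eq_mul, P, Y, sg,
        Fintype.sum_prod_type, Fintype.sum_bool, Pi.single_apply, Matrix.diagonal_apply]
      by_cases hab : a = b
      · subst hab
        rw [Finset.sum_eq_single a (fun v _ hv => by simp [Ne.symm hv]) (by simp)]
        simp
        ring
      · have : ∀ v, ¬ (a = v ∧ b = v) := fun v h => hab (h.1.trans h.2.symm)
        simp [hab]
        refine Finset.sum_eq_zero fun v _ => ?_
        have := this v
        split_ifs <;> simp_all
    have h := IsLocalPSDSum.of_independent (P u) ?_ ?_ Y Prod.fst ?_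
      (fun i => c i • (Kb ^ t i) u) ?_ Finset.univ 0 ∅ (by simp)
    · simp only [zero_add, Finset.card_empty, Finset.card_univ, hPY] at h
      convert h using 4
      ext a b
      simp only [Matrix.smul_apply, vecMulVec_apply, smul_eq_mul, Pi.smul_apply]
      ring
    · rintro i ⟨v, σ⟩
      have := abs_le.1 (abs_signed_pow_le hK (t i) u v)
      cases σ <;> simp [P, sg] <;> linarith
    · intro i
      simp only [P, sg, Fintype.sum_prod_type, Fintype.sum_bool]
      rw [← sum_pow_row h1 (t i) u]
      exact Finset.sum_congr rfl fun v _ => by simp; ring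
    · rintro i ⟨a, σ⟩ v h
      by_contra hne
      exact h (by simp [Y, hne])
    · intro i v
      simp [P, Y, sg, Fintype.sum_prod_type, Pi.single_apply]
      ring
  convert IsLocalPSDSum.sum Finset.univ fun u _ => (hloc u).smul (hp u) using 1
  have hdiag : ∀ i, diagonal p = ∑ u, p u • diagonal ((K ^ t i) u) := by
    intro i
    ext a b
    by_cases hab : a = b
    · subst hab
      simp [Matrix.sum_apply, stationary_pow hst]
    · simp [Matrix.sum_apply, hab]
  have hrow : ∀ u, aeval Kb (∑ i, C (c i) * X ^ t i) u = ∑ i, c i • (Kb ^ t i) u := by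
    intro u
    ext v
    simp [Matrix.sum_apply, Algebra.algebraMap_eq_smul_one]
  rw [walkForm_apply, map_add, mul_add, mul_aeval_sq hrev]
  simp only [hrow]
  rw [map_sum, Finset.mul_sum]
  simp only [smul_add, Finset.sum_add_distrib, Finset.smul_sum]
  congr 1
  rw [Finset.sum_comm]
  refine Finset.sum_congr rfl fun i _ => ?_
  have hX : diagonal p * aeval Kb (C (c i ^ 2) * (1 - (X ^ t i) ^ 2))
      = c i ^ 2 • (diagonal p - diagonal p * aeval Kb (((X : ℝ[X]) ^ t i) ^ 2)) := by
    simp only [map_mul, aeval_C, Algebra.algebraMap_eq_smul_one, smul_mul_assoc, one_mul,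
      mul_smul_comm, map_sub, mul_sub, mul_one, smul_sub]
  rw [hX, mul_aeval_sq hrev]
  nth_rw 1 [hdiag i]
  rw [← Finset.sum_sub_distrib, Finset.smul_sum]
  refine Finset.sum_congr rfl fun u _ => ?_
  simp only [map_pow, aeval_X, smul_sub, smul_smul]
  simp only [mul_comm]

/-- A bound `a` on the absolute row sums of `Kb ^ t` is a bound on `± Kb ^ t` with a proof that is
local on pairs of coordinates. -/
lemma isLocalPSDSum_const_sub_pow {Kb : Matrix V V ℝ} {p : V → ℝ} (hp : ∀ u, 0 ≤ p u)
    (hrev : diagonal p * Kb = Kbᵀ * diagonal p) {R : ℕ} (hR : 2 ≤ R) (a s : ℝ) (hs : |s| ≤ 1)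
    (t : ℕ) (ha : ∀ u, ∑ v, |(Kb ^ t) u v| ≤ a) :
    IsLocalPSDSum R (walkForm p Kb (C a - C s * X ^ t)) := by
  have h := IsLocalPSDSum.of_dominant hR (fun u => a * p u) (s • (diagonal p * Kb ^ t)) ?_ ?_
  · convert h using 1
    simp only [walkForm_apply, map_sub, map_mul, aeval_C, aeval_X, map_pow, Algebra.algebraMap_eq_smul_one,
      smul_mul_assoc, one_mul, mul_smul_comm, mul_one]
    congr 1
    ext u v
    by_cases h : u = v <;> simp [h]
  · have := reversible_aeval hrev ((X : ℝ[X]) ^ t)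
    simp only [map_pow, aeval_X] at this
    rw [Matrix.IsSymm, Matrix.transpose_smul, Matrix.transpose_mul, Matrix.diagonal_transpose,
      ← this]
  · intro u
    have h2 : ∀ v, |(s • (diagonal p * Kb ^ t)) u v| ≤ p u * |(Kb ^ t) u v| := by
      intro v
      rw [Matrix.smul_apply, Matrix.diagonal_mul, smul_eq_mul, abs_mul, abs_mul,
        abs_of_nonneg (hp u)]
      exact mul_le_of_le_one_left (mul_nonneg (hp u) (abs_nonneg _)) hs
    calc _ ≤ ∑ v, p u * |(Kb ^ t) u v| := Finset.sum_le_sum fun v _ => h2 v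
      _ = p u * ∑ v, |(Kb ^ t) u v| := by rw [Finset.mul_sum]
      _ ≤ p u * a := mul_le_mul_of_nonneg_left (ha u) (hp u)
      _ = a * p u := mul_comm _ _

end Walk

/-! ### The univariate certificate -/

section Certificate

/-- The inequality `(n + 1) w² ≤ n + w ^ (2 (n + 1))` of arithmetic and geometric means, with an
explicit sum-of-squares proof. -/
lemma amgm_sos (n : ℕ) (w : ℝ) :
    ∑ j ∈ Finset.range n, ((n : ℝ) - j) * (w ^ j - w ^ (j + 2)) ^ 2
      = n - (n + 1) * w ^ 2 + w ^ (2 * (n + 1)) := by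
  have hgeom : ∀ n : ℕ, ∑ j ∈ Finset.range n, (w ^ j - w ^ (j + 2)) ^ 2
      = (1 - w ^ 2) * (1 - w ^ (2 * n)) := by
    intro n
    induction n with
    | zero => simp
    | succ n ih => rw [Finset.sum_range_succ, ih]; ring
  induction n with
  | zero => simp
  | succ n ih =>
    have : ∀ j : ℕ, (((n + 1 : ℕ) : ℝ) - j) * (w ^ j - w ^ (j + 2)) ^ 2
        = ((n : ℝ) - j) * (w ^ j - w ^ (j + 2)) ^ 2 + (w ^ j - w ^ (j + 2)) ^ 2 := by
      intro j; push_cast; ring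
    simp only [this, Finset.sum_add_distrib]
    rw [hgeom, Finset.sum_range_succ, ih]
    push_cast
    ring

variable {V : Type*} [Fintype V] [DecidableEq V]

/-- The square `(1 - b X)²`, up to an error `2 b² / k`: one walk of length `0` and `k` walks of
length `1`, the latter with coefficients `-b / k`. -/
lemma isLocalPSDSum_root_sub {K Kb : Matrix V V ℝ}
    {p : V → ℝ} (hp : ∀ u, 0 ≤ p u) (hK : ∀ u v, |Kb u v| ≤ K u v) (h1 : ∀ u, ∑ v, K u v = 1)
    (hst : ∀ v, ∑ u, p u * K u v = p v) (hrev : diagonal p * Kb = Kbᵀ * diagonal p)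
    {k R : ℕ} (hk : 1 ≤ k) (hR : k + 1 ≤ R) (b : ℝ) :
    IsLocalPSDSum R (walkForm p Kb ((1 - C b * X) ^ 2 + C (2 * b ^ 2 / k))) := by
  have hk0 : (k : ℝ) ≠ 0 := by positivity
  have hw := (isLocalPSDSum_walks (ι := Option (Fin k)) hp hK h1 hst hrev
    (fun i => i.elim 1 fun _ => -b / k) (fun i => i.elim 0 fun _ => 1)).mono
    (R' := R) (by simpa using hR)
  have hpow := isLocalPSDSum_const_sub_pow hp hrev (R := R) (by omega) 1 (-1) (by simp) 2
    fun u => (Finset.sum_le_sum fun v _ => abs_signed_pow_le hK 2 u v).trans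
      (sum_pow_row h1 2 u).le
  have := hw.add (hpow.smul (c := b ^ 2 / k) (by positivity))
  rw [← map_smul, ← map_add] at this
  convert this using 2
  refine Polynomial.funext fun x => ?_
  simp [Fintype.sum_option]
  field_simp
  ring

/-- The square `(a X ^ i - b X ^ j)²`, up to an error of order `1 / k`: `k` walks of length `i` and
`k` walks of length `j`. -/
lemma isLocalPSDSum_pow_sub_pow {K Kb : Matrix V V ℝ}
    {p : V → ℝ} (hp : ∀ u, 0 ≤ p u) (hK : ∀ u v, |Kb u v| ≤ K u v) (h1 : ∀ u, ∑ v, K u v = 1)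
    (hst : ∀ v, ∑ u, p u * K u v = p v) (hrev : diagonal p * Kb = Kbᵀ * diagonal p)
    {k R : ℕ} (hk : 1 ≤ k) (hR : 2 * k ≤ R) (a b : ℝ) (i j : ℕ) :
    IsLocalPSDSum R (walkForm p Kb
      ((C a * X ^ i - C b * X ^ j) ^ 2 + C (2 * (a ^ 2 + b ^ 2) / k))) := by
  have hk0 : (k : ℝ) ≠ 0 := by positivity
  have hw := (isLocalPSDSum_walks (ι := Fin k ⊕ Fin k) hp hK h1 hst hrev
    (Sum.elim (fun _ => a / k) fun _ => -b / k) (Sum.elim (fun _ => i) fun _ => j)).mono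
    (R' := R) (by simp; omega)
  have hpow : ∀ t, IsLocalPSDSum R (walkForm p Kb (C 1 - C (-1) * X ^ t)) := fun t =>
    isLocalPSDSum_const_sub_pow hp hrev (R := R) (by omega) 1 (-1) (by simp) t
    fun u => (Finset.sum_le_sum fun v _ => abs_signed_pow_le hK t u v).trans
      (sum_pow_row h1 t u).le
  have := (hw.add ((hpow (2 * i)).smul (c := a ^ 2 / k) (by positivity))).add
    ((hpow (2 * j)).smul (c := b ^ 2 / k) (by positivity))
  simp only [← map_smul, ← map_add] at this
  convert this using 2
  refine Polynomial.funext fun x => ?_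
  simp
  field_simp
  ring

/-- The certificate for an abstract reversible signed walk. With `w = X / ε` and `l = n + 1`,
`5 / 2 - w` is the combination of `(1 - w)²`, the squares of `amgm_sos`, `ε - w ^ (2 l)` and a
constant `slack`, which has to absorb the errors of the squares. -/
lemma isLocalPSDSum_sub_X {K Kb : Matrix V V ℝ}
    {p : V → ℝ} (hp : ∀ u, 0 ≤ p u) (hK : ∀ u v, |Kb u v| ≤ K u v) (h1 : ∀ u, ∑ v, K u v = 1)
    (hst : ∀ v, ∑ u, p u * K u v = p v) (hrev : diagonal p * Kb = Kbᵀ * diagonal p)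
    {ε : ℝ} (hε0 : 0 < ε) (hε : ε ^ 2 ≤ 1 / 3) {n k : ℕ}
    (hk : (1 / ε) ^ (2 * (n + 1)) ≤ k)
    (hb : ∀ u, ∑ v, |(Kb ^ (2 * (n + 1))) u v| ≤ ε ^ (2 * (n + 1) + 1)) :
    IsLocalPSDSum (k * (n + 1) + 1) (walkForm p Kb (C (5 * ε / 2) - X)) := by
  have hk0 : (0 : ℝ) < k := lt_of_lt_of_le (by positivity) hk
  have hk1 : 1 ≤ k := by exact_mod_cast hk0
  have hkinv : 1 / (k : ℝ) ≤ (ε ^ 2) ^ (n + 1) := by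
    rw [div_le_iff₀ hk0, ← pow_mul]
    calc (1 : ℝ) = ε ^ (2 * (n + 1)) * (1 / ε) ^ (2 * (n + 1)) := by
          rw [← mul_pow, mul_one_div_cancel hε0.ne', one_pow]
      _ ≤ _ := by gcongr
  have hR1 : k + 1 ≤ k * (n + 1) + 1 := by nlinarith
  set R := k * (n + 1) + 1 with hR
  have hε1 : ε ≤ 1 := by nlinarith
  -- `err j` is the error with which the `j`-th square of `amgm_sos` is available.
  set err : ℕ → ℝ := fun j => 2 * ((ε⁻¹ ^ j) ^ 2 + (ε⁻¹ ^ (j + 2)) ^ 2) / k with herr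
  have herrj : ∀ j ∈ Finset.range n, ((n : ℝ) - j) * err j ≤ 20 / 9 := by
    intro j hj
    obtain ⟨i, rfl⟩ : ∃ i, n = j + i + 1 := ⟨n - j - 1, by have := Finset.mem_range.1 hj; omega⟩
    have h3 : ((i : ℝ) + 1) * (ε ^ 2) ^ i ≤ 1 := by
      calc ((i : ℝ) + 1) * (ε ^ 2) ^ i ≤ (i + 1) * (1 / 3) ^ i := by gcongr
        _ ≤ 3 ^ i * (1 / 3) ^ i := by
          gcongr
          have := one_add_mul_le_pow (a := (2 : ℝ)) (by norm_num) i
          norm_num at this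
          nlinarith [(Nat.cast_nonneg i : (0 : ℝ) ≤ i)]
        _ = 1 := by rw [← mul_pow]; norm_num
    have h4 : err j ≤ 2 * (1 + (ε ^ 2) ^ 2) * (ε ^ 2) ^ i := by
      calc err j = 2 * ((ε⁻¹ ^ j) ^ 2 + (ε⁻¹ ^ (j + 2)) ^ 2) * (1 / k) := by rw [herr]; ring
        _ ≤ 2 * ((ε⁻¹ ^ j) ^ 2 + (ε⁻¹ ^ (j + 2)) ^ 2) * (ε ^ 2) ^ (j + i + 1 + 1) := by gcongr
        _ = _ := by
          simp only [inv_pow]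
          field_simp
          ring
    have h5 : (ε ^ 2) ^ 2 ≤ 1 / 9 := by nlinarith [sq_nonneg ε]
    calc (((j + i + 1 : ℕ) : ℝ) - j) * err j = (i + 1) * err j := by push_cast; ring
      _ ≤ (i + 1) * (2 * (1 + (ε ^ 2) ^ 2) * (ε ^ 2) ^ i) := by gcongr
      _ = 2 * (1 + (ε ^ 2) ^ 2) * ((i + 1) * (ε ^ 2) ^ i) := by ring
      _ ≤ 2 * (1 + 1 / 9) * 1 := by gcongr
      _ = 20 / 9 := by norm_num
  have hsum : ∑ j ∈ Finset.range n, ((n : ℝ) - j) * err j ≤ n * (20 / 9) := by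
    simpa using Finset.sum_le_card_nsmul _ _ _ herrj
  have hroot : (ε⁻¹) ^ 2 / k ≤ (ε ^ 2) ^ n := by
    calc (ε⁻¹) ^ 2 / k = (ε⁻¹) ^ 2 * (1 / k) := by ring
      _ ≤ (ε⁻¹) ^ 2 * (ε ^ 2) ^ (n + 1) := by gcongr
      _ = _ := by simp only [inv_pow]; field_simp; ring
  set slack : ℝ := 5 / 2 - 1 + 1 / (2 * (n + 1)) - ε / (2 * (n + 1)) - (ε⁻¹) ^ 2 / k
    - 1 / (2 * (n + 1)) * ∑ j ∈ Finset.range n, ((n : ℝ) - j) * err j with hslack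
  have hslack0 : 0 ≤ slack := by
    have hn : (0 : ℝ) < n + 1 := by positivity
    have h6 : ε / (2 * (n + 1)) ≤ 1 / (2 * ((n : ℝ) + 1)) := by gcongr
    rcases Nat.eq_zero_or_pos n with rfl | hn0
    · simp at hroot h6 hslack ⊢
      linarith
    · have h7 : (ε ^ 2) ^ n ≤ 1 / 3 :=
        (pow_le_of_le_one (by positivity) (by linarith) hn0.ne').trans hε
      have h8 : 1 / (2 * ((n : ℝ) + 1)) * ∑ j ∈ Finset.range n, ((n : ℝ) - j) * err j
          ≤ 10 / 9 := by
        rw [one_div_mul_eq_div, div_le_iff₀ (by positivity)]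
        linarith
      linarith
  have hA := (isLocalPSDSum_root_sub hp hK h1 hst hrev hk1 hR1 ε⁻¹).smul (c := ε / 2)
    (by positivity)
  have hB : IsLocalPSDSum R (∑ j ∈ Finset.range n, (ε / (2 * (n + 1)) * ((n : ℝ) - j)) •
      (walkForm p Kb ((C (ε⁻¹ ^ j) * X ^ j - C (ε⁻¹ ^ (j + 2)) * X ^ (j + 2)) ^ 2
        + C (err j)))) := by
    refine .sum _ fun j hj => .smul ?_ ?_
    · have := Finset.mem_range.1 hj
      exact isLocalPSDSum_pow_sub_pow hp hK h1 hst hrev hk1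
        (by rw [hR]; nlinarith) _ _ _ _
    · have : (j : ℝ) ≤ n := by exact_mod_cast (Finset.mem_range.1 hj).le
      have := sub_nonneg.2 this
      positivity
  have hR2 : 2 ≤ R := by omega
  have hC := (isLocalPSDSum_const_sub_pow hp hrev hR2 _ 1 (by simp) _ hb).smul
    (c := ε / (2 * (n + 1)) * ε⁻¹ ^ (2 * (n + 1))) (by positivity)
  have hD := (isLocalPSDSum_const_sub_pow hp hrev hR2 1 0 (by simp) 0
    (fun u => (Finset.sum_le_sum fun v _ => abs_signed_pow_le hK 0 u v).trans
      (sum_pow_row h1 0 u).le)).smul (c := ε * slack) (by positivity)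
  have := ((hA.add hB).add hC).add hD
  simp only [← map_smul, ← map_add, ← map_sum] at this
  convert this using 2
  refine Polynomial.funext fun x => ?_
  have hsos := amgm_sos n (ε⁻¹ * x)
  simp only [eval_add, eval_sub, eval_smul, eval_finsetSum, eval_mul, eval_pow, eval_C, eval_X,
    eval_one, smul_eq_mul, zero_mul, sub_zero, mul_one, ← mul_pow]
  have hsplit : ∑ j ∈ Finset.range n, ε / (2 * (n + 1)) * ((n : ℝ) - j) *
      (((ε⁻¹ * x) ^ j - (ε⁻¹ * x) ^ (j + 2)) ^ 2 + err j)
      = ε / (2 * (n + 1)) * (∑ j ∈ Finset.range n,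
          ((n : ℝ) - j) * ((ε⁻¹ * x) ^ j - (ε⁻¹ * x) ^ (j + 2)) ^ 2)
        + ε / (2 * (n + 1)) * ∑ j ∈ Finset.range n, ((n : ℝ) - j) * err j := by
    rw [← mul_add, ← Finset.sum_add_distrib, Finset.mul_sum]
    exact Finset.sum_congr rfl fun j _ => by ring
  rw [hsplit, hsos, hslack]
  have hx : x = ε * (ε⁻¹ * x) := by field_simp
  have hx2 : ε⁻¹ ^ (2 * (n + 1)) * (ε ^ (2 * (n + 1) + 1) - 1 * x ^ (2 * (n + 1)))
      = ε - (ε⁻¹ * x) ^ (2 * (n + 1)) := by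
    rw [mul_pow, mul_sub, pow_succ, ← mul_assoc, ← mul_pow, inv_mul_cancel₀ hε0.ne']
    ring
  rw [mul_assoc _ (ε⁻¹ ^ (2 * (n + 1))), hx2]
  nth_rw 1 [hx]
  generalize ε⁻¹ * x = w
  generalize ∑ j ∈ Finset.range n, ((n : ℝ) - j) * err j = E
  have hn : (n : ℝ) + 1 ≠ 0 := by positivity
  generalize w ^ (2 * (n + 1)) = wn
  field_simp
  ring

end Certificate

/-! ### Weighted graphs -/

section Graph
variable {V : Type*} [Fintype V] [DecidableEq V] [Nonempty V]

lemma gm_pos {A : Matrix V V ℝ} (hrow : ∀ u, 0 < ∑ v, A u v) : 0 < gm A :=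
  Finset.sum_pos (fun u _ => hrow u) Finset.univ_nonempty

lemma gpi_pos {A : Matrix V V ℝ} (hrow : ∀ u, 0 < ∑ v, A u v) (u : V) : 0 < gpi A u :=
  div_pos (hrow u) (gm_pos hrow)

lemma sum_gpi {A : Matrix V V ℝ} (hrow : ∀ u, 0 < ∑ v, A u v) : ∑ u, gpi A u = 1 := by
  simp only [gpi, ← Finset.sum_div]
  exact div_self (gm_pos hrow).ne'

lemma gpiStar_pos {A : Matrix V V ℝ} (hrow : ∀ u, 0 < ∑ v, A u v) : 0 < gpiStar A := by
  rw [gpiStar, Finset.lt_inf'_iff]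
  exact fun u _ => gpi_pos hrow u

lemma card_mul_gpiStar_le {A : Matrix V V ℝ} (hrow : ∀ u, 0 < ∑ v, A u v) :
    Fintype.card V * gpiStar A ≤ 1 := by
  rw [← sum_gpi hrow, ← nsmul_eq_mul, ← Finset.card_univ]
  exact Finset.card_nsmul_le_sum _ _ _ fun u hu => Finset.inf'_le _ hu

lemma sum_abs_row_le (M : Matrix V V ℝ) (u : V) :
    ∑ v, |M u v| ≤ l2opNorm M * √(Fintype.card V) := by
  -- Test the operator norm on the vector of signs of the row.
  set s : EuclideanSpace ℝ V := WithLp.toLp 2 fun v => (SignType.sign (M u v) : ℝ) with hs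
  have h1 : ∑ v, |M u v| = (Matrix.toEuclideanCLM (𝕜 := ℝ) M s) u := by
    simp [hs, Matrix.mulVec, dotProduct, self_mul_sign]
  have h2 : ‖s‖ ≤ √(Fintype.card V) := by
    rw [EuclideanSpace.norm_eq]
    apply Real.sqrt_le_sqrt
    have : ∀ v, ‖s v‖ ^ 2 ≤ 1 := by
      intro v
      rcases lt_trichotomy (M u v) 0 with h | h | h <;> simp [hs, h]
    simpa using Finset.sum_le_card_nsmul Finset.univ (fun v => ‖s v‖ ^ 2) 1 fun v _ => this v
  rw [h1]
  calc _ ≤ ‖(Matrix.toEuclideanCLM (𝕜 := ℝ) M s) u‖ := le_abs_self _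
    _ ≤ ‖Matrix.toEuclideanCLM (𝕜 := ℝ) M s‖ := PiLp.norm_apply_le _ _
    _ ≤ l2opNorm M * ‖s‖ := ContinuousLinearMap.le_opNorm _ _
    _ ≤ _ := by
      gcongr
      exact norm_nonneg _

/-- The choice of the walk length `l` makes `K̄ ^ (2 l)` negligible even in the maximal row sum
norm, where passing from the operator norm costs `√|V| ≤ π_* ^ (-1/2)`. -/
lemma walk_length_bound {ρ ε s N : ℝ} {l : ℕ} (hρ : 0 < ρ) (hρε : ρ < ε) (hs : 0 < s)
    (hN : N * s ≤ 1) (hl : Real.log (1 / (ε ^ 2 * s)) / (4 * Real.log (ε / ρ)) ≤ l) :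
    ρ ^ (2 * l) * √N ≤ ε ^ (2 * l + 1) := by
  have hε : 0 < ε := hρ.trans hρε
  have hlog : 0 < Real.log (ε / ρ) := Real.log_pos ((one_lt_div hρ).2 hρε)
  rw [div_le_iff₀ (by positivity)] at hl
  have h1 : 1 / (ε ^ 2 * s) ≤ (ε / ρ) ^ (4 * l) := by
    rw [← Real.log_le_log_iff (by positivity) (by positivity), Real.log_pow]
    push_cast
    linarith
  rw [div_pow, div_le_div_iff₀ (by positivity) (by positivity)] at h1
  have h2 : √N ≤ √(1 / s) := Real.sqrt_le_sqrt ((le_div_iff₀ hs).2 hN)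
  have h3 : ρ ^ (2 * l) * √(1 / s) ≤ ε ^ (2 * l + 1) := by
    apply (sq_le_sq₀ (by positivity) (by positivity)).1
    rw [mul_pow, Real.sq_sqrt (by positivity), mul_one_div, div_le_iff₀ hs]
    calc (ρ ^ (2 * l)) ^ 2 = 1 * ρ ^ (4 * l) := by ring
      _ ≤ _ := h1
      _ = _ := by ring
  exact (mul_le_mul_of_nonneg_left h2 (by positivity)).trans h3

lemma diagonal_mul_signed {A : Matrix V V ℝ} (hrow : ∀ u, 0 < ∑ v, A u v) (Ξ : Matrix V V ℝ) :
    diagonal (gpi A) * Matrix.hadamard Ξ (gK A) = (gm A)⁻¹ • Matrix.hadamard Ξ A := by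
  ext u v
  have h1 : gdeg A u ≠ 0 := (hrow u).ne'
  have h2 := (gm_pos hrow).ne'
  simp only [Matrix.diagonal_mul, Matrix.hadamard_apply, Matrix.smul_apply, gpi, gK,
    Matrix.of_apply, smul_eq_mul]
  field_simp

lemma isLocalPSDSum_graph
    (A : Matrix V V ℝ) (hA : A.IsSymm) (hA0 : ∀ u v, 0 ≤ A u v)
    (hrow : ∀ u, 0 < ∑ v, A u v)
    (Ξ : Matrix V V ℝ) (hΞsym : Ξ.IsSymm) (hΞ : ∀ u v, Ξ u v = 1 ∨ Ξ u v = -1)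
    (ρ ε : ℝ) (hρ : 0 < ρ) (hρε : ρ < ε) (hε : ε ≤ 1 / Real.sqrt 3)
    (l k : ℕ)
    (hl : l = ⌈Real.log (1 / (ε ^ 2 * gpiStar A)) / (4 * Real.log (ε / ρ))⌉₊)
    (hk : k = ⌈(1 / ε) ^ (2 * l)⌉₊)
    (hop : l2opNorm ((Matrix.hadamard Ξ (gK A)) ^ (2 * l)) ≤ ρ ^ (2 * l)) :
    IsLocalPSDSum (k * l + 1)
      ((5 * ε / 2) • Matrix.diagonal (gpi A) - (gm A)⁻¹ • Matrix.hadamard Ξ A) := by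
  have hε0 : 0 < ε := hρ.trans hρε
  have hε3 : ε ^ 2 ≤ 1 / 3 := by
    calc ε ^ 2 ≤ (1 / √3) ^ 2 := by gcongr
      _ = 1 / 3 := by rw [div_pow, Real.sq_sqrt (by norm_num)]; norm_num
  have hs := gpiStar_pos hrow
  have hs1 : gpiStar A ≤ 1 := by
    have h1 : (1 : ℝ) ≤ Fintype.card V := by exact_mod_cast Fintype.card_pos
    nlinarith [card_mul_gpiStar_le hrow]
  have hlpos : l ≠ 0 := by
    rw [hl, Ne, Nat.ceil_eq_zero, not_le]
    refine div_pos (Real.log_pos ((one_lt_div (by positivity)).2 ?_))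
      (mul_pos (by norm_num) (Real.log_pos ((one_lt_div hρ).2 hρε)))
    nlinarith [sq_nonneg ε]
  obtain ⟨n, rfl⟩ := Nat.exists_eq_succ_of_ne_zero hlpos
  have hm := gm_pos hrow
  have hrev : diagonal (gpi A) * Matrix.hadamard Ξ (gK A)
      = (Matrix.hadamard Ξ (gK A))ᵀ * diagonal (gpi A) := by
    have h := diagonal_mul_signed hrow Ξ
    have h' := congrArg Matrix.transpose h
    rw [Matrix.transpose_mul, Matrix.diagonal_transpose] at h'
    rw [h', h]
    ext u v
    simp [hA.apply u v, hΞsym.apply u v]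
  have h := isLocalPSDSum_sub_X (K := gK A) (Kb := Matrix.hadamard Ξ (gK A)) (p := gpi A)
    (fun u => (gpi_pos hrow u).le) ?_ ?_ ?_ hrev hε0 hε3 (n := n) (k := k) ?_ ?_
  · rw [← diagonal_mul_signed hrow Ξ]
    convert h using 1
    rw [map_sub]
    simp [walkForm_apply, Algebra.algebraMap_eq_smul_one]
  · intro u v
    have h1 : 0 ≤ A u v / gdeg A u := div_nonneg (hA0 u v) (hrow u).le
    rcases hΞ u v with h | h <;> simp [gK, h, abs_of_nonneg h1]
  · intro u
    simp only [gK, Matrix.of_apply, ← Finset.sum_div]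
    exact div_self (hrow u).ne'
  · intro v
    simp only [gK, gpi, Matrix.of_apply]
    have : ∀ u, gdeg A u / gm A * (A u v / gdeg A u) = A v u / gm A := by
      intro u
      have h1 : gdeg A u ≠ 0 := (hrow u).ne'
      rw [hA.apply u v]
      field_simp
    simp only [this, ← Finset.sum_div]
    rfl
  · rw [hk]
    exact Nat.le_ceil _
  · intro u
    refine (sum_abs_row_le _ u).trans
      ((mul_le_mul_of_nonneg_right hop (Real.sqrt_nonneg _)).trans ?_)
    exact walk_length_bound hρ hρε hs (card_mul_gpiStar_le hrow) (hl ▸ Nat.le_ceil _)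

end Graph

theorem sa_2xor_refutation {V : Type*} [Fintype V] [DecidableEq V] [Nonempty V]
    (A : Matrix V V ℝ) (hA : A.IsSymm) (hA0 : ∀ u v, 0 ≤ A u v)
    (hrow : ∀ u, 0 < ∑ v, A u v)
    (Ξ : Matrix V V ℝ) (hΞsym : Ξ.IsSymm) (hΞ : ∀ u v, Ξ u v = 1 ∨ Ξ u v = -1)
    (ρ ε : ℝ) (hρ : 0 < ρ) (hρε : ρ < ε) (hε : ε ≤ 1 / Real.sqrt 3)
    (l k : ℕ)
    (hl : l = ⌈Real.log (1 / (ε ^ 2 * gpiStar A)) / (4 * Real.log (ε / ρ))⌉₊)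
    (hk : k = ⌈(1 / ε) ^ (2 * l)⌉₊)
    (hop : l2opNorm ((Matrix.hadamard Ξ (gK A)) ^ (2 * l)) ≤ ρ ^ (2 * l)) :
    IsLocalPSDSum (k * l + 1)
      ((5 * ε / 2) • Matrix.diagonal (gpi A) - (gm A)⁻¹ • Matrix.hadamard Ξ A) ∧
    IsLocalPSDSum (k * l + 1)
      ((5 * ε / 2) • Matrix.diagonal (gpi A) + (gm A)⁻¹ • Matrix.hadamard Ξ A) ∧
    ∀ x : V → ℝ, (∀ u, x u = 1 ∨ x u = -1) →
      |∑ u, ∑ v, Ξ u v * A u v * x u * x v| ≤ (5 * ε / 2) * gm A ∧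
      1 / 2 + (1 / (2 * gm A)) * ∑ u, ∑ v, Ξ u v * A u v * x u * x v
        ≤ 1 / 2 + (5 / 4) * ε := by
  have hminus := isLocalPSDSum_graph A hA hA0 hrow Ξ hΞsym hΞ ρ ε hρ hρε hε l k hl hk hop
  -- The second matrix is the first one for the instance with all signs flipped.
  have hneg : Matrix.hadamard (-Ξ) (gK A) = -Matrix.hadamard Ξ (gK A) := by
    ext u v; simp
  have hplus := isLocalPSDSum_graph A hA hA0 hrow (-Ξ) (by rw [Matrix.IsSymm,
      Matrix.transpose_neg, hΞsym]) (fun u v => by rcases hΞ u v with h | h <;> simp [h])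
    ρ ε hρ hρε hε l k hl hk (by rwa [hneg, Even.neg_pow (even_two_mul l)])
  have hneg' : Matrix.hadamard (-Ξ) A = -Matrix.hadamard Ξ A := by
    ext u v; simp
  rw [hneg', smul_neg, sub_neg_eq_add] at hplus
  refine ⟨hminus, hplus, fun x hx => ?_⟩
  have hm := gm_pos hrow
  have hx2 : ∀ u, x u * x u = 1 := fun u => by rcases hx u with h | h <;> simp [h]
  have hdiag : x ⬝ᵥ ((5 * ε / 2) • Matrix.diagonal (gpi A)) *ᵥ x = 5 * ε / 2 := by
    rw [Matrix.smul_mulVec, dotProduct_smul]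
    simp only [dotProduct, Matrix.mulVec_diagonal]
    rw [Finset.sum_congr rfl fun u _ => (by rw [mul_left_comm, hx2, mul_one] :
      x u * (gpi A u * x u) = gpi A u), sum_gpi hrow, smul_eq_mul, mul_one]
  set S := ∑ u, ∑ v, Ξ u v * A u v * x u * x v with hS
  have hform : x ⬝ᵥ ((gm A)⁻¹ • Matrix.hadamard Ξ A) *ᵥ x = (gm A)⁻¹ * S := by
    rw [Matrix.smul_mulVec, dotProduct_smul, smul_eq_mul, hS]
    simp only [dotProduct, Matrix.mulVec, Finset.mul_sum, Matrix.hadamard_apply]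
    exact Finset.sum_congr rfl fun u _ => Finset.sum_congr rfl fun v _ => by ring
  have h1 := hminus.quadratic_nonneg x
  have h2 := hplus.quadratic_nonneg x
  rw [Matrix.sub_mulVec, dotProduct_sub, hdiag, hform] at h1
  rw [Matrix.add_mulVec, dotProduct_add, hdiag, hform] at h2
  have hSm : S = (gm A)⁻¹ * S * gm A := by field_simp
  refine ⟨abs_le.2 ⟨?_, ?_⟩, ?_⟩
  · nlinarith
  · nlinarith
  · have : 1 / (2 * gm A) * S = (gm A)⁻¹ * S / 2 := by field_simp
    linarith
end
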